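/- arXiv:1301.6219 — 3 statements merged into one kernel-verified Lean document; each statement's English description precedes it below -/
import Mathlib

section
/- (Branch invariance of V₀.) Let V(z₁,…,zₙ) = ∑_{(l,m)∈I} ε_{lm} Li₂(z_l/z_m) be a potential function and let (z₁,…,zₙ) be a solution of H, so that D_k := z_k ∂V/∂z_k ∈ 2πi ℤ for every k. Choose, for each (l,m) ∈ I, an integer a_{lm}, and for each k, an integer b_k, and set: Li₂*(z_l/z_m) := Li₂(z_l/z_m) + 2 a_{lm} π i (log z_l − log z_m), log* z_k := log z_k + 2πi b_k, and D_k* := D_k + 2πi (∑_{m:(k,m)∈I} ε_{km} a_{km} − ∑_{l:(l,k)∈I} ε_{lk} a_{lk}) (the value of z_k times the partial derivative in z_k of the star-modified potential). Then ∑_{(l,m)∈I} ε_{lm} Li₂*(z_l/z_m) − ∑_{k=1}^n D_k* · log* z_k ≡ V(z₁,…,zₙ) − ∑_{k=1}^n D_k log z_k (mod 4π²). In other words, the value of V₀ at a solution of H is invariant under a choice of branch of the logarithm, modulo 4π². -/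
/-- The dilogarithm `Li₂(u) = −∫₀^u log(1−t)/t dt`, integrated along the
straight segment from `0` to `u` (parametrized by `t = u·s`, `s ∈ [0,1]`). -/
noncomputable def Li2 (u : ℂ) : ℂ := -∫ s in (0:ℝ)..(1:ℝ), Complex.log (1 - u * s) / s

/-- The value of `z_k · ∂V/∂z_k` for the potential function
`V(z₁,…,zₙ) = ∑_{(l,m)∈I} ε_{lm} Li₂(z_l/z_m)`, namely
`∑_{m:(k,m)∈I} (−ε_{km}) log(1 − z_k/z_m) + ∑_{l:(l,k)∈I} ε_{lk} log(1 − z_l/z_k)`. -/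
noncomputable def zdV (n : ℕ) (I : Finset (Fin n × Fin n)) (ε : Fin n × Fin n → ℤ)
    (z : Fin n → ℂ) (k : Fin n) : ℂ :=
  (∑ p ∈ I.filter (fun p => p.1 = k), (-(ε p : ℂ)) * Complex.log (1 - z p.1 / z p.2)) +
  ∑ p ∈ I.filter (fun p => p.2 = k), (ε p : ℂ) * Complex.log (1 - z p.1 / z p.2)

/-! Under the three changes of branch the value of `V₀` moves in two independent ways. Correcting the
dilogarithms by `2πi a (log z_l − log z_m)` while correcting each `D_k` by `2πi` times the divergence
of `ε a` leaves `V₀` exactly as it was, by summation by parts over the edges `(l, m)`. Changing the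
logarithms then subtracts `∑ D_k* · 2πi b_k`; since `z` solves `H`, every `D_k*` is again an integer
multiple of `2πi`, and a product of two elements of `2πiℤ` is an element of `4π²ℤ`. -/

section DirectedMultigraph

open Finset

variable {E V R : Type*} [DecidableEq V] (s : Finset E) (src tgt : E → V)

/-- The divergence (outflow minus inflow) at `v` of a weight `w` on the edges in `s` of a directed
multigraph. In `V₀` the vertices are the indices `k`, and a pair `(l, m)` is an edge from `l`
to `m`. -/
def divergence [AddCommGroup R] (w : E → R) (v : V) : R :=
  (∑ e ∈ s with src e = v, w e) - ∑ e ∈ s with tgt e = v, w e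

lemma intCast_divergence [Ring R] (w : E → ℤ) (v : V) :
    ((divergence s src tgt w v : ℤ) : R) = divergence s src tgt (fun e => (w e : R)) v := by
  simp only [divergence, Int.cast_sub, Int.cast_sum]

variable [Fintype V]

lemma sum_sum_fiber_mul [NonUnitalNonAssocSemiring R] (g : E → V) (w : E → R) (f : V → R) :
    ∑ v, (∑ e ∈ s with g e = v, w e) * f v = ∑ e ∈ s, w e * f (g e) := by
  rw [← sum_fiberwise s g]
  refine sum_congr rfl fun v _ => ?_
  rw [sum_mul]
  refine sum_congr rfl fun e he => ?_
  rw [(mem_filter.mp he).2]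

lemma sum_divergence_mul [NonUnitalNonAssocRing R] (w : E → R) (f : V → R) :
    ∑ v, divergence s src tgt w v * f v = ∑ e ∈ s, w e * (f (src e) - f (tgt e)) := by
  simp only [divergence, sub_mul, mul_sub, sum_sub_distrib, sum_sum_fiber_mul]

end DirectedMultigraph

section ModifiedPotential

open Finset

variable {E V R : Type*} [Fintype V] (s : Finset E)

/-- The modified potential `V₀ = ∑ ε Li₂ − ∑ D log` as a function of the data entering it: the
values `L` of the dilogarithm on the edges, the logarithmic derivatives `D` and the logarithms `ℓ`
at the vertices. These are independent variables, so that their branches can be changed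
separately. -/
def modifiedPotential [NonUnitalNonAssocRing R] (ε L : E → R) (D ℓ : V → R) : R :=
  (∑ e ∈ s, ε e * L e) - ∑ v, D v * ℓ v

lemma modifiedPotential_add_divergence [DecidableEq V] [CommRing R] (src tgt : E → V)
    (ε L a : E → R) (D ℓ : V → R) (c : R) :
    modifiedPotential s ε (fun e => L e + c * a e * (ℓ (src e) - ℓ (tgt e)))
        (fun v => D v + c * divergence s src tgt (fun e => ε e * a e) v) ℓ =
      modifiedPotential s ε L D ℓ := by
  have edge_correction : ∑ e ∈ s, ε e * (c * a e * (ℓ (src e) - ℓ (tgt e))) =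
      ∑ v, c * divergence s src tgt (fun e => ε e * a e) v * ℓ v := by
    simp only [mul_assoc c, ← mul_sum, sum_divergence_mul, mul_left_comm _ c, mul_assoc]
  simp only [modifiedPotential, mul_add, add_mul, sum_add_distrib, edge_correction,
    add_sub_add_right_eq_sub]

lemma modifiedPotential_add_right [NonUnitalNonAssocRing R] (ε L : E → R) (D ℓ b : V → R) :
    modifiedPotential s ε L D (fun v => ℓ v + b v) =
      modifiedPotential s ε L D ℓ - ∑ v, D v * b v := by
  simp only [modifiedPotential, mul_add, sum_add_distrib, sub_sub]

end ModifiedPotential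

section BranchInvariance

open Complex Finset

lemma exists_sum_mul_two_pi_mul_I_eq {V : Type*} (t : Finset V) (D : V → ℂ)
    (hD : ∀ v ∈ t, exp (D v) = 1) (b : V → ℤ) :
    ∃ N : ℤ, ∑ v ∈ t, D v * (2 * Real.pi * I * b v) = N * (4 * (Real.pi : ℂ) ^ 2) := by
  choose! d hd using fun v hv => exp_eq_one_iff.mp (hD v hv)
  refine ⟨-∑ v ∈ t, d v * b v, ?_⟩
  push_cast
  rw [← sum_neg_distrib, sum_mul]
  refine sum_congr rfl fun v hv => ?_
  rw [hd v hv]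
  linear_combination (4 * (Real.pi : ℂ) ^ 2 * d v * b v) * I_sq

theorem stmt3_general {E V : Type*} [Fintype V] [DecidableEq V] (s : Finset E) (src tgt : E → V)
    (ε a : E → ℤ) (b : V → ℤ) (L : E → ℂ) (D ℓ : V → ℂ) (hD : ∀ v, exp (D v) = 1) :
    ∃ N : ℤ,
      modifiedPotential s (fun e => (ε e : ℂ))
          (fun e => L e + 2 * Real.pi * I * a e * (ℓ (src e) - ℓ (tgt e)))
          (fun v => D v + 2 * Real.pi * I * divergence s src tgt (fun e => (ε e : ℂ) * a e) v)
          (fun v => ℓ v + 2 * Real.pi * I * b v) -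
        modifiedPotential s (fun e => (ε e : ℂ)) L D ℓ = N * (4 * (Real.pi : ℂ) ^ 2) := by
  let D' v := D v + 2 * Real.pi * I * divergence s src tgt (fun e => (ε e : ℂ) * a e) v
  have hD' (v : V) : exp (D' v) = 1 := by
    rw [← hD v, exp_eq_exp_iff_exists_int]
    refine ⟨divergence s src tgt (fun e => ε e * a e) v, ?_⟩
    simp only [D', intCast_divergence, Int.cast_mul, mul_comm (2 * Real.pi * I)]
  obtain ⟨N, hN⟩ := exists_sum_mul_two_pi_mul_I_eq univ D' (fun v _ => hD' v) b
  refine ⟨-N, ?_⟩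
  rw [modifiedPotential_add_right, modifiedPotential_add_divergence, hN]
  push_cast
  ring

end BranchInvariance

/-- (Branch invariance of `V₀`.)  Let `(z₁,…,zₙ)` be a solution of `H` for the
potential function `V = ∑_{(l,m)∈I} ε_{lm} Li₂(z_l/z_m)` (so each
`D_k := z_k ∂V/∂z_k` lies in `2πiℤ`).  For any integers `a_{lm}` and `b_k`, set
`Li₂*(z_l/z_m) := Li₂(z_l/z_m) + 2a_{lm}πi(log z_l − log z_m)`,
`log* z_k := log z_k + 2πi b_k`, and
`D_k* := D_k + 2πi(∑_{m:(k,m)∈I} ε_{km}a_{km} − ∑_{l:(l,k)∈I} ε_{lk}a_{lk})`.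
Then `∑ ε_{lm} Li₂*(z_l/z_m) − ∑_k D_k* log* z_k ≡ V(z) − ∑_k D_k log z_k
(mod 4π²)`: the value of `V₀` at a solution of `H` is invariant under a choice
of branch of the logarithm, modulo `4π²`. -/
theorem stmt3 (n : ℕ) (I : Finset (Fin n × Fin n)) (ε : Fin n × Fin n → ℤ)
    (hI : ∀ p ∈ I, p.1 ≠ p.2) (hε : ∀ p ∈ I, ε p = 1 ∨ ε p = -1)
    (z : Fin n → ℂ) (hz : ∀ k, z k ≠ 0)
    (hratio : ∀ p ∈ I, z p.1 / z p.2 ≠ 0 ∧ z p.1 / z p.2 ≠ 1)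
    (hsol : ∀ k : Fin n, Complex.exp (zdV n I ε z k) = 1)
    (a : Fin n × Fin n → ℤ) (b : Fin n → ℤ) :
    ∃ N : ℤ,
      ((∑ p ∈ I, (ε p : ℂ) *
          (Li2 (z p.1 / z p.2) +
            2 * (a p : ℂ) * (Real.pi : ℂ) * Complex.I *
              (Complex.log (z p.1) - Complex.log (z p.2)))) -
        ∑ k : Fin n,
          (zdV n I ε z k +
              2 * (Real.pi : ℂ) * Complex.I *
                ((∑ p ∈ I.filter (fun p => p.1 = k), (ε p : ℂ) * (a p : ℂ)) -
                  ∑ p ∈ I.filter (fun p => p.2 = k), (ε p : ℂ) * (a p : ℂ))) *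
            (Complex.log (z k) + 2 * (Real.pi : ℂ) * Complex.I * (b k : ℂ))) -
      ((∑ p ∈ I, (ε p : ℂ) * Li2 (z p.1 / z p.2)) -
        ∑ k : Fin n, zdV n I ε z k * Complex.log (z k)) =
      (N : ℂ) * (4 * (Real.pi : ℂ) ^ 2) := by
  have edge_factor (p : Fin n × Fin n) : 2 * (a p : ℂ) * Real.pi * Complex.I =
      2 * Real.pi * Complex.I * a p := by ring
  simp only [edge_factor]
  exact stmt3_general I Prod.fst Prod.snd ε a b (fun p => Li2 (z p.1 / z p.2)) (zdV n I ε z)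
    (fun k => Complex.log (z k)) hsol
end

section
/- (V₀ is constant on path components of the solution set.) Let V(z₁,…,zₙ) = ∑_{(l,m)∈I} ε_{lm} Li₂(z_l/z_m) be a potential function. Let α = (α₁,…,αₙ) : [0,1] → (ℂ∖{0})ⁿ be a differentiable path such that for all t ∈ [0,1] and all (l,m) ∈ I the ratio α_l(t)/α_m(t) lies in ℂ∖([1,∞) ∪ {0}), and suppose differentiable functions ℓ₁,…,ℓₙ : [0,1] → ℂ satisfy exp(ℓ_k(t)) = α_k(t) for all t (branches of log along the path). If there exist integers r₁,…,rₙ such that z_k ∂V/∂z_k evaluated at α(t) equals r_k π i for all t ∈ [0,1] and all k = 1,…,n, then the function t ↦ V(α(t)) − ∑_{k=1}^n r_k π i · ℓ_k(t) is constant on [0,1]. In particular, the value of V₀ is constant on each path component of the solution set of H. -/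
/-! In logarithmic coordinates `z = exp w` the identity `d Li₂(exp u) = -log (1 - exp u) du` makes
`z_k ∂V/∂z_k` the partial derivative of `w ↦ V(exp w)` in `w_k`. Hence `z_k ∂V/∂z_k = c_k` for all
`k` says that `w` is a critical point of the holomorphic function `w ↦ V(exp w) - ∑ c_k w_k`, and a
function is constant along a differentiable path of its critical points. -/

open Complex Set MeasureTheory
open ContinuousLinearMap (proj)

section Dilogarithm

variable {u : ℂ}

open scoped ComplexOrder in
theorem one_sub_mem_slitPlane_iff : 1 - u ∈ slitPlane ↔ ∀ x : ℝ, 1 ≤ x → u ≠ x := by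
  simp only [mem_slitPlane_iff_not_le_zero, sub_nonpos, Complex.le_def, one_re, one_im]
  refine ⟨?_, fun h ⟨hre, him⟩ ↦ h u.re hre (Complex.ext rfl him.symm)⟩
  rintro h x hx rfl
  exact h ⟨hx, rfl⟩

theorem one_sub_mul_ofReal_mem_slitPlane (hu : 1 - u ∈ slitPlane) {s : ℝ} (hs : s ∈ Icc (0 : ℝ) 1) :
    1 - u * s ∈ slitPlane := by
  have hseg : 1 + s • -u ∈ slitPlane :=
    starConvex_one_slitPlane.add_smul_mem (by rwa [← sub_eq_add_neg]) hs.1 hs.2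
  rwa [smul_neg, ← sub_eq_add_neg, real_smul, mul_comm] at hseg

theorem hasDerivAt_log_one_sub_mul_ofReal {s : ℝ} (hs : 1 - u * s ∈ slitPlane) :
    HasDerivAt (fun s : ℝ ↦ log (1 - u * s)) (-u / (1 - u * s)) s := by
  have hlin : HasDerivAt (fun s : ℝ ↦ 1 - u * (s : ℂ)) (-u) s := by
    simpa using (ofRealCLM.hasDerivAt (x := s)).const_mul u |>.const_sub 1
  exact hlin.clog_real hs

theorem intervalIntegrable_log_one_sub_mul_div (hu : 1 - u ∈ slitPlane) :
    IntervalIntegrable (fun s : ℝ ↦ log (1 - u * s) / s) volume 0 1 := by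
  -- Away from `0` the integrand is the slope at `0` of `s ↦ log (1 - u * s)`.
  set f : ℝ → ℂ := fun s ↦ log (1 - u * s)
  set U : Set ℝ := {s | 1 - u * s ∈ slitPlane}
  have hU : IsOpen U := isOpen_slitPlane.preimage (by fun_prop)
  have hf : ∀ s ∈ U, DifferentiableAt ℝ f s := fun s hs ↦
    (hasDerivAt_log_one_sub_mul_ofReal hs).differentiableAt
  have hIcc : Icc 0 1 ⊆ U := fun s hs ↦ one_sub_mul_ofReal_mem_slitPlane hu hs
  have h0 : (0 : ℝ) ∈ U := hIcc (left_mem_Icc.2 zero_le_one)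
  have hslope : ContinuousOn (dslope f 0) U :=
    (continuousOn_dslope (hU.mem_nhds h0)).2
      ⟨fun s hs ↦ (hf s hs).continuousAt.continuousWithinAt, hf 0 h0⟩
  refine ((hslope.mono hIcc).intervalIntegrable_of_Icc zero_le_one).congr fun s hs ↦ ?_
  rw [uIoc_of_le zero_le_one] at hs
  simp [f, dslope_of_ne _ hs.1.ne', slope_def_module, div_eq_inv_mul]

theorem integral_inv_one_sub_mul (hu : 1 - u ∈ slitPlane) (h0 : u ≠ 0) :
    ∫ s in (0 : ℝ)..1, (1 - u * s)⁻¹ = -(log (1 - u) / u) := by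
  have hmem : ∀ s ∈ uIcc (0 : ℝ) 1, 1 - u * s ∈ slitPlane := fun s hs ↦
    one_sub_mul_ofReal_mem_slitPlane hu (by rwa [uIcc_of_le zero_le_one] at hs)
  have hprim : ∀ s ∈ uIcc (0 : ℝ) 1,
      HasDerivAt (fun s : ℝ ↦ -(log (1 - u * s) / u)) (1 - u * s)⁻¹ s := fun s hs ↦ by
    refine ((hasDerivAt_log_one_sub_mul_ofReal (hmem s hs)).div_const u).fun_neg.congr_deriv ?_
    have := slitPlane_ne_zero (hmem s hs)
    field_simp
  have hcont : ContinuousOn (fun s : ℝ ↦ (1 - u * s)⁻¹) (uIcc 0 1) :=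
    ContinuousOn.inv₀ (by fun_prop) fun s hs ↦ slitPlane_ne_zero (hmem s hs)
  simpa using intervalIntegral.integral_eq_sub_of_hasDerivAt hprim hcont.intervalIntegrable

theorem hasDerivAt_log_one_sub_mul_div {s : ℂ} (hs : s ≠ 0) (hu : 1 - u * s ∈ slitPlane) :
    HasDerivAt (fun v ↦ log (1 - v * s) / s) (-(1 - u * s)⁻¹) u := by
  have hlin : HasDerivAt (fun v ↦ 1 - v * s) (-s) u := by
    simpa using ((hasDerivAt_id u).mul_const s).const_sub 1
  refine ((hlin.clog hu).div_const s).congr_deriv ?_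
  have := slitPlane_ne_zero hu
  field_simp

theorem exists_closedBall_norm_inv_one_sub_mul_le (hu : 1 - u ∈ slitPlane) :
    ∃ δ > 0, ∃ C, ∀ v ∈ Metric.closedBall u δ,
      1 - v ∈ slitPlane ∧ ∀ s ∈ Icc (0 : ℝ) 1, ‖(1 - v * s)⁻¹‖ ≤ C := by
  have hopen : IsOpen {v : ℂ | 1 - v ∈ slitPlane} := isOpen_slitPlane.preimage (by fun_prop)
  obtain ⟨δ, hδ, hball⟩ := Metric.nhds_basis_closedBall.mem_iff.1 (hopen.mem_nhds hu)
  have hcont : ContinuousOn (fun q : ℂ × ℝ ↦ (1 - q.1 * q.2)⁻¹)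
      (Metric.closedBall u δ ×ˢ Icc (0 : ℝ) 1) :=
    ContinuousOn.inv₀ (by fun_prop) fun q hq ↦
      slitPlane_ne_zero (one_sub_mul_ofReal_mem_slitPlane (hball hq.1) hq.2)
  obtain ⟨C, hC⟩ :=
    ((isCompact_closedBall u δ).prod isCompact_Icc).exists_bound_of_continuousOn hcont
  exact ⟨δ, hδ, C, fun v hv ↦ ⟨hball hv, fun s hs ↦ hC (v, s) ⟨hv, hs⟩⟩⟩

-- The closed form `-(log (1 - u) / u)` takes the junk value `0` at `u = 0`, where the derivative
-- is `1`; the integral is correct there too.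
theorem hasDerivAt_Li2 (hu : 1 - u ∈ slitPlane) :
    HasDerivAt Li2 (∫ s in (0 : ℝ)..1, (1 - u * s)⁻¹) u := by
  obtain ⟨δ, hδ, C, hball⟩ := exists_closedBall_norm_inv_one_sub_mul_le hu
  have hIoc : ∀ {s : ℝ}, s ∈ uIoc 0 1 → s ∈ Ioc (0 : ℝ) 1 := fun hs ↦ by
    rwa [uIoc_of_le zero_le_one] at hs
  have hderiv : HasDerivAt (fun v ↦ ∫ s in (0 : ℝ)..1, log (1 - v * s) / s)
      (∫ s in (0 : ℝ)..1, -(1 - u * s)⁻¹) u :=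
    (intervalIntegral.hasDerivAt_integral_of_dominated_loc_of_deriv_le
      (μ := volume) (F := fun (v : ℂ) (s : ℝ) ↦ log (1 - v * s) / s)
      (F' := fun (v : ℂ) (s : ℝ) ↦ -(1 - v * s)⁻¹) (bound := fun _ ↦ C)
      (Metric.closedBall_mem_nhds u hδ)
      (.of_forall fun v ↦ Measurable.aestronglyMeasurable (by fun_prop))
      (intervalIntegrable_log_one_sub_mul_div hu)
      (Measurable.aestronglyMeasurable (by fun_prop))
      (.of_forall fun s hs v hv ↦ by
        simpa only [norm_neg] using (hball v hv).2 s (Ioc_subset_Icc_self (hIoc hs)))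
      intervalIntegrable_const
      (.of_forall fun s hs v hv ↦
        hasDerivAt_log_one_sub_mul_div (ofReal_ne_zero.2 (hIoc hs).1.ne')
          (one_sub_mul_ofReal_mem_slitPlane (hball v hv).1 (Ioc_subset_Icc_self (hIoc hs))))).2
  refine hderiv.fun_neg.congr_deriv ?_
  rw [intervalIntegral.integral_neg, neg_neg]

theorem hasDerivAt_Li2_exp (hu : 1 - exp u ∈ slitPlane) :
    HasDerivAt (fun u ↦ Li2 (exp u)) (-log (1 - exp u)) u := by
  refine ((hasDerivAt_Li2 hu).comp u (hasDerivAt_exp u)).congr_deriv ?_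
  rw [integral_inv_one_sub_mul hu (exp_ne_zero u), neg_mul, div_mul_cancel₀ _ (exp_ne_zero u)]

theorem hasFDerivAt_Li2_exp_div_exp {E : Type*} [NormedAddCommGroup E] [NormedSpace ℂ E]
    {f g : E → ℂ} {f' g' : E →L[ℂ] ℂ} {x : E} (hf : HasFDerivAt f f' x) (hg : HasFDerivAt g g' x)
    (hx : 1 - exp (f x) / exp (g x) ∈ slitPlane) :
    HasFDerivAt (fun y ↦ Li2 (exp (f y) / exp (g y)))
      (-log (1 - exp (f x) / exp (g x)) • (f' - g')) x := by
  simp only [← exp_sub] at hx ⊢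
  have hLi : HasDerivAt (fun u ↦ Li2 (exp u)) (-log (1 - exp (f x - g x))) (f x - g x) :=
    hasDerivAt_Li2_exp hx
  exact HasDerivAt.comp_hasFDerivAt (h₂ := fun u ↦ Li2 (exp u)) x hLi (hf.fun_sub hg)

end Dilogarithm

section Potential

/-- The potential function `V(z) = ∑_{(l,m)∈I} ε_{lm} Li₂(z_l/z_m)`, with variables indexed by an
arbitrary type and arbitrary integer coefficients `ε_{lm}`. -/
noncomputable def potential {ι : Type*} (I : Finset (ι × ι)) (ε : ι × ι → ℤ) (z : ι → ℂ) : ℂ :=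
  ∑ p ∈ I, (ε p : ℂ) * Li2 (z p.1 / z p.2)

variable {n : ℕ} {I : Finset (Fin n × Fin n)} {ε : Fin n × Fin n → ℤ}

theorem sum_zdV_smul {M : Type*} [AddCommGroup M] [Module ℂ M] (z : Fin n → ℂ) (v : Fin n → M) :
    ∑ k, zdV n I ε z k • v k =
      ∑ p ∈ I, (ε p : ℂ) • -log (1 - z p.1 / z p.2) • (v p.1 - v p.2) := by
  simp only [zdV, Finset.sum_filter, ← Finset.sum_add_distrib, Finset.sum_smul]
  rw [Finset.sum_comm]
  refine Finset.sum_congr rfl fun p _ ↦ ?_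
  simp only [add_smul, ite_smul, zero_smul, Finset.sum_add_distrib, Finset.sum_ite_eq,
    Finset.mem_univ, if_true]
  module

theorem hasFDerivAt_potential_exp {w : Fin n → ℂ}
    (hw : ∀ p ∈ I, 1 - exp (w p.1) / exp (w p.2) ∈ slitPlane) :
    HasFDerivAt (fun w : Fin n → ℂ ↦ potential I ε fun k ↦ exp (w k))
      (∑ k, zdV n I ε (fun k ↦ exp (w k)) k • (proj k : (Fin n → ℂ) →L[ℂ] ℂ)) w := by
  rw [sum_zdV_smul _ fun k ↦ (proj k : (Fin n → ℂ) →L[ℂ] ℂ)]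
  exact HasFDerivAt.fun_sum fun p hp ↦
    (hasFDerivAt_Li2_exp_div_exp (hasFDerivAt_apply p.1 w) (hasFDerivAt_apply p.2 w)
      (hw p hp)).const_mul _

theorem hasFDerivAt_zero_of_zdV_eq {w c : Fin n → ℂ}
    (hw : ∀ p ∈ I, 1 - exp (w p.1) / exp (w p.2) ∈ slitPlane)
    (hc : ∀ k, zdV n I ε (fun k ↦ exp (w k)) k = c k) :
    HasFDerivAt (fun w : Fin n → ℂ ↦ potential I ε (fun k ↦ exp (w k)) - ∑ k, c k * w k)
      (0 : (Fin n → ℂ) →L[ℂ] ℂ) w := by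
  have hlin : HasFDerivAt (fun w : Fin n → ℂ ↦ ∑ k, c k * w k)
      (∑ k, c k • (proj k : (Fin n → ℂ) →L[ℂ] ℂ)) w :=
    HasFDerivAt.fun_sum fun k _ ↦ (hasFDerivAt_apply k w).const_mul (c k)
  refine ((hasFDerivAt_potential_exp hw).fun_sub hlin).congr_fderiv ?_
  simp only [hc, sub_self]

theorem stmt4_general {E : Type*} [NormedAddCommGroup E] [NormedSpace ℝ E] {S : Set E}
    (hS : Convex ℝ S) {α ℓ : E → Fin n → ℂ} {c : Fin n → ℂ} (hℓ : DifferentiableOn ℝ ℓ S)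
    (hexp : ∀ t ∈ S, ∀ k, exp (ℓ t k) = α t k)
    (hratio : ∀ t ∈ S, ∀ p ∈ I, ∀ x : ℝ, 1 ≤ x → α t p.1 / α t p.2 ≠ x)
    (hc : ∀ t ∈ S, ∀ k, zdV n I ε (α t) k = c k) {t s : E} (ht : t ∈ S) (hs : s ∈ S) :
    potential I ε (α t) - ∑ k, c k * ℓ t k = potential I ε (α s) - ∑ k, c k * ℓ s k := by
  have hα : ∀ t ∈ S, α t = fun k ↦ exp (ℓ t k) := fun t ht ↦ funext fun k ↦ (hexp t ht k).symm
  set F : (Fin n → ℂ) → ℂ := fun w ↦ potential I ε (fun k ↦ exp (w k)) - ∑ k, c k * w k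
  have hcrit : ∀ t ∈ S, HasFDerivAt F (0 : (Fin n → ℂ) →L[ℂ] ℂ) (ℓ t) := fun t ht ↦
    hasFDerivAt_zero_of_zdV_eq
      (fun p hp ↦ one_sub_mem_slitPlane_iff.2 (by simpa only [hα t ht] using hratio t ht p hp))
      (hα t ht ▸ hc t ht)
  have hderiv : ∀ t ∈ S, HasFDerivWithinAt (F ∘ ℓ) (0 : E →L[ℝ] ℂ) S t := fun t ht ↦ by
    simpa using ((hcrit t ht).restrictScalars ℝ).comp_hasFDerivWithinAt t
      (hℓ t ht).hasFDerivWithinAt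
  have hconst : ‖F (ℓ t) - F (ℓ s)‖ ≤ 0 * ‖t - s‖ :=
    hS.norm_image_sub_le_of_norm_hasFDerivWithin_le hderiv (fun _ _ ↦ norm_zero.le) hs ht
  rw [hα t ht, hα s hs]
  exact sub_eq_zero.1 (norm_le_zero_iff.1 (by simpa only [zero_mul] using hconst))

end Potential

/-- (`V₀` is constant on path components of the solution set.)  Let
`V = ∑_{(l,m)∈I} ε_{lm} Li₂(z_l/z_m)` be a potential function, let
`α : [0,1] → (ℂ∖{0})ⁿ` be a differentiable path along which every ratio
`α_l(t)/α_m(t)` with `(l,m) ∈ I` lies in `ℂ∖([1,∞) ∪ {0})`, and let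
`ℓ₁,…,ℓₙ` be differentiable branches of the logarithm along the path
(`exp(ℓ_k(t)) = α_k(t)`).  If there are integers `r₁,…,rₙ` with
`z_k ∂V/∂z_k (α(t)) = r_k πi` for all `t ∈ [0,1]` and all `k`, then
`t ↦ V(α(t)) − ∑_k r_k πi ℓ_k(t)` is constant on `[0,1]`. -/
theorem stmt4 (n : ℕ) (I : Finset (Fin n × Fin n)) (ε : Fin n × Fin n → ℤ)
    (hI : ∀ p ∈ I, p.1 ≠ p.2) (hε : ∀ p ∈ I, ε p = 1 ∨ ε p = -1)
    (α : ℝ → Fin n → ℂ) (ℓ : ℝ → Fin n → ℂ)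
    (hα : ∀ k : Fin n, DifferentiableOn ℝ (fun t => α t k) (Set.Icc (0:ℝ) 1))
    (hℓ : ∀ k : Fin n, DifferentiableOn ℝ (fun t => ℓ t k) (Set.Icc (0:ℝ) 1))
    (hne : ∀ t ∈ Set.Icc (0:ℝ) 1, ∀ k : Fin n, α t k ≠ 0)
    (hratio : ∀ t ∈ Set.Icc (0:ℝ) 1, ∀ p ∈ I,
      α t p.1 / α t p.2 ≠ 0 ∧ ∀ x : ℝ, 1 ≤ x → α t p.1 / α t p.2 ≠ (x : ℂ))
    (hexp : ∀ t ∈ Set.Icc (0:ℝ) 1, ∀ k : Fin n, Complex.exp (ℓ t k) = α t k)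
    (r : Fin n → ℤ)
    (hr : ∀ t ∈ Set.Icc (0:ℝ) 1, ∀ k : Fin n,
      zdV n I ε (α t) k = (r k : ℂ) * (Real.pi : ℂ) * Complex.I) :
    ∀ t ∈ Set.Icc (0:ℝ) 1, ∀ s ∈ Set.Icc (0:ℝ) 1,
      (∑ p ∈ I, (ε p : ℂ) * Li2 (α t p.1 / α t p.2)) -
          (∑ k : Fin n, (r k : ℂ) * (Real.pi : ℂ) * Complex.I * ℓ t k) =
        (∑ p ∈ I, (ε p : ℂ) * Li2 (α s p.1 / α s p.2)) -
          ∑ k : Fin n, (r k : ℂ) * (Real.pi : ℂ) * Complex.I * ℓ s k := fun _ ht _ hs ↦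
  stmt4_general (convex_Icc 0 1) (differentiableOn_pi.2 hℓ) hexp
    (fun t ht p hp ↦ (hratio t ht p hp).2) hr ht hs
end

section
/- (Scale invariance of V₀.) Let V(z₁,…,zₙ) = ∑_{(l,m)∈I} ε_{lm} Li₂(z_l/z_m) be a potential function and let z = (z₁,…,zₙ) be a solution of H, so that for each k the value z_k ∂V/∂z_k equals r_k π i for some even integer r_k. Then for every nonzero λ ∈ ℂ, the point λz = (λz₁,…,λzₙ) is also a solution of H with the same values r_k πi, and V₀(λz) ≡ V₀(z) (mod 4π²). -/
/-- The modified potential function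
`V₀(z) = V(z) − ∑_k (z_k ∂V/∂z_k)·log z_k` with `V = ∑_{(l,m)∈I} ε_{lm} Li₂(z_l/z_m)`. -/
noncomputable def V0 (n : ℕ) (I : Finset (Fin n × Fin n)) (ε : Fin n × Fin n → ℤ)
    (z : Fin n → ℂ) : ℂ :=
  (∑ p ∈ I, (ε p : ℂ) * Li2 (z p.1 / z p.2)) -
    ∑ k : Fin n, zdV n I ε z k * Complex.log (z k)

/-! Both `V` and `z_k ∂V/∂z_k` depend only on the ratios `z_l/z_m`, so scaling `z` by `λ` changes
`V₀` only through the terms `(z_k ∂V/∂z_k) log z_k`. Up to multiples of `2πi`, `log (λ z_k)` is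
`log λ + log z_k`. The `log λ` contributions cancel because `∑_k z_k ∂V/∂z_k = 0` (Euler's relation
for the degree-zero homogeneous `V`), and what remains is a sum of products of two integer multiples
of `2πi`, hence an integer multiple of `4π²`. -/

lemma exists_int_log_mul_eq {a b : ℂ} (ha : a ≠ 0) (hb : b ≠ 0) :
    ∃ m : ℤ, Complex.log (a * b) =
      Complex.log a + Complex.log b + m * (2 * Real.pi * Complex.I) := by
  rw [← Complex.exp_eq_exp_iff_exists_int, Complex.exp_add, Complex.exp_log ha,
    Complex.exp_log hb, Complex.exp_log (mul_ne_zero ha hb)]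

lemma exists_int_sum_mul_log_sub_log_mul {ι : Type*} {s : Finset ι} {w z : ι → ℂ} {c : ℂ}
    (hw : ∑ k ∈ s, w k = 0) (hw_int : ∀ k ∈ s, ∃ m : ℤ, w k = m * (2 * Real.pi * Complex.I))
    (hc : c ≠ 0) (hz : ∀ k ∈ s, z k ≠ 0) :
    ∃ N : ℤ, ∑ k ∈ s, w k * (Complex.log (z k) - Complex.log (c * z k)) =
      N * (4 * (Real.pi : ℂ) ^ 2) := by
  have hterm : ∀ k ∈ s, ∃ N : ℤ, w k * (Complex.log (z k) - Complex.log (c * z k)) =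
      N * (4 * (Real.pi : ℂ) ^ 2) - w k * Complex.log c := by
    intro k hk
    obtain ⟨m, hm⟩ := hw_int k hk
    obtain ⟨j, hj⟩ := exists_int_log_mul_eq hc (hz k hk)
    refine ⟨m * j, ?_⟩
    rw [hj, hm]
    push_cast
    linear_combination -4 * (m : ℂ) * j * (Real.pi : ℂ) ^ 2 * Complex.I_sq
  choose! N hN using hterm
  refine ⟨∑ k ∈ s, N k, ?_⟩
  rw [Finset.sum_congr rfl hN, Finset.sum_sub_distrib, ← Finset.sum_mul, ← Finset.sum_mul, hw,
    zero_mul, sub_zero, Int.cast_sum]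

section PotentialFunction

variable {n : ℕ} (I : Finset (Fin n × Fin n)) (ε : Fin n × Fin n → ℤ) (z : Fin n → ℂ)

lemma sum_zdV : ∑ k, zdV n I ε z k = 0 := by
  simp only [zdV, Finset.sum_add_distrib, Finset.sum_fiberwise, neg_mul, Finset.sum_neg_distrib,
    neg_add_cancel]

lemma zdV_const_mul {c : ℂ} (hc : c ≠ 0) (k : Fin n) :
    zdV n I ε (fun i => c * z i) k = zdV n I ε z k := by
  simp only [zdV, mul_div_mul_left _ _ hc]

lemma V0_const_mul_sub {c : ℂ} (hc : c ≠ 0) :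
    V0 n I ε (fun i => c * z i) - V0 n I ε z =
      ∑ k, zdV n I ε z k * (Complex.log (z k) - Complex.log (c * z k)) := by
  simp only [V0, zdV_const_mul I ε z hc, mul_div_mul_left _ _ hc, mul_sub, Finset.sum_sub_distrib,
    sub_sub_sub_cancel_left]

theorem stmt5_general (hz : ∀ k, z k ≠ 0)
    (hratio : ∀ p ∈ I, z p.1 / z p.2 ≠ 0 ∧ z p.1 / z p.2 ≠ 1)
    (r : Fin n → ℤ) (hreven : ∀ k, Even (r k))
    (hr : ∀ k, zdV n I ε z k = (r k : ℂ) * (Real.pi : ℂ) * Complex.I) {c : ℂ} (hc : c ≠ 0) :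
    (∀ p ∈ I, (c * z p.1) / (c * z p.2) ≠ 0 ∧ (c * z p.1) / (c * z p.2) ≠ 1) ∧
    (∀ k, Complex.exp (zdV n I ε (fun i => c * z i) k) = 1) ∧
    (∀ k, zdV n I ε (fun i => c * z i) k = (r k : ℂ) * (Real.pi : ℂ) * Complex.I) ∧
    ∃ N : ℤ, V0 n I ε (fun i => c * z i) - V0 n I ε z = (N : ℂ) * (4 * (Real.pi : ℂ) ^ 2) := by
  have zdV_int : ∀ k, ∃ m : ℤ, zdV n I ε z k = m * (2 * Real.pi * Complex.I) := by
    intro k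
    obtain ⟨m, hm⟩ := hreven k
    refine ⟨m, ?_⟩
    rw [hr, hm]
    push_cast
    ring
  simp only [zdV_const_mul I ε z hc, mul_div_mul_left _ _ hc, V0_const_mul_sub I ε z hc]
  exact ⟨hratio, fun k => Complex.exp_eq_one_iff.2 (zdV_int k), hr,
    exists_int_sum_mul_log_sub_log_mul (sum_zdV I ε z) (fun k _ => zdV_int k) hc fun k _ => hz k⟩

end PotentialFunction

/-- (Scale invariance of `V₀`.)  Let `z = (z₁,…,zₙ)` be a solution of `H` for
the potential function `V = ∑_{(l,m)∈I} ε_{lm} Li₂(z_l/z_m)`, so that each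
`z_k ∂V/∂z_k` equals `r_k πi` for some even integer `r_k`.  Then for every
nonzero `λ ∈ ℂ` the point `λz` is also a solution of `H` with the same values
`r_k πi`, and `V₀(λz) ≡ V₀(z) (mod 4π²)`. -/
theorem stmt5 (n : ℕ) (I : Finset (Fin n × Fin n)) (ε : Fin n × Fin n → ℤ)
    (hI : ∀ p ∈ I, p.1 ≠ p.2) (hε : ∀ p ∈ I, ε p = 1 ∨ ε p = -1)
    (z : Fin n → ℂ) (hz : ∀ k, z k ≠ 0)
    (hratio : ∀ p ∈ I, z p.1 / z p.2 ≠ 0 ∧ z p.1 / z p.2 ≠ 1)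
    (hsol : ∀ k : Fin n, Complex.exp (zdV n I ε z k) = 1)
    (r : Fin n → ℤ) (hreven : ∀ k, Even (r k))
    (hr : ∀ k : Fin n, zdV n I ε z k = (r k : ℂ) * (Real.pi : ℂ) * Complex.I) :
    ∀ lam : ℂ, lam ≠ 0 →
      (∀ p ∈ I, (lam * z p.1) / (lam * z p.2) ≠ 0 ∧ (lam * z p.1) / (lam * z p.2) ≠ 1) ∧
      (∀ k : Fin n, Complex.exp (zdV n I ε (fun i => lam * z i) k) = 1) ∧
      (∀ k : Fin n,
        zdV n I ε (fun i => lam * z i) k = (r k : ℂ) * (Real.pi : ℂ) * Complex.I) ∧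
      ∃ N : ℤ, V0 n I ε (fun i => lam * z i) - V0 n I ε z =
        (N : ℂ) * (4 * (Real.pi : ℂ) ^ 2) := by
  exact fun _lam hlam => stmt5_general I ε z hz hratio r hreven hr hlam
end
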